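/- The section at the level-two vertex 11 of the commutator subgroup of the Basilica group contains all of B: for every g ∈ B there exists h in the commutator subgroup ⁅B, B⁆ such that h (true :: true :: w) = true :: true :: g w for all w : List Bool. -/

import Mathlib

/-!
If `h (u ++ w) = v ++ g w` for all `w`, then `h` carries the vertex `u` to the vertex `v` with
section `g`; such statements compose and invert along paths of vertices. The recursions of `a` and
`b` show that, at the vertex `1`, `b ^ 2` has section `a` and `⁅a, b⁆` has section `b`. Hence at the
vertex `11` the elements `⁅a, b⁆ ^ 2` and `⁅b ^ 2, ⁅a, b⁆⁆` of the commutator subgroup have sections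
`a` and `b`, and sections at a fixed vertex multiply.
-/

namespace Basilica

mutual
  /-- Underlying map of the Basilica generator `a`. -/
  def aF : List Bool → List Bool
    | [] => []
    | false :: w => false :: w
    | true :: w => true :: bF w
  /-- Underlying map of the Basilica generator `b`. -/
  def bF : List Bool → List Bool
    | [] => []
    | false :: w => true :: w
    | true :: w => false :: aF w
end

mutual
  /-- Inverse of `aF`. -/
  def aI : List Bool → List Bool
    | [] => []
    | false :: w => false :: w
    | true :: w => true :: bI w
  /-- Inverse of `bF`. -/
  def bI : List Bool → List Bool
    | [] => []
    | false :: w => true :: aI w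
    | true :: w => false :: w
end

theorem basilica_inv : ∀ w : List Bool,
    aI (aF w) = w ∧ bI (bF w) = w ∧ aF (aI w) = w ∧ bF (bI w) = w := by
  intro w
  induction w with
  | nil => simp [aF, bF, aI, bI]
  | cons x w ih =>
    cases x <;>
      simp [aF, bF, aI, bI, ih.1, ih.2.1, ih.2.2.1, ih.2.2.2]

/-- The Basilica generator `a` as a permutation of the binary tree `List Bool`:
`a [] = []`, `a (false :: w) = false :: w`, `a (true :: w) = true :: b w`. -/
def a : Equiv.Perm (List Bool) :=
  ⟨aF, aI, fun w => (basilica_inv w).1, fun w => (basilica_inv w).2.2.1⟩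

/-- The Basilica generator `b` as a permutation of the binary tree `List Bool`:
`b [] = []`, `b (false :: w) = true :: w`, `b (true :: w) = false :: a w`. -/
def b : Equiv.Perm (List Bool) :=
  ⟨bF, bI, fun w => (basilica_inv w).2.1, fun w => (basilica_inv w).2.2.2⟩

/-- Underlying map of the pair `(g, h)` acting on the two subtrees. -/
def pairF (g h : List Bool → List Bool) : List Bool → List Bool
  | [] => []
  | false :: w => false :: g w
  | true :: w => true :: h w

/-- The permutation of `List Bool` acting as `g` on the subtree below `false`
and as `h` on the subtree below `true`, fixing the root. -/
def pair (g h : Equiv.Perm (List Bool)) : Equiv.Perm (List Bool) :=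
  ⟨pairF g h, pairF g.symm h.symm,
    fun w => by cases w with
      | nil => rfl
      | cons x w => cases x <;> simp [pairF],
    fun w => by cases w with
      | nil => rfl
      | cons x w => cases x <;> simp [pairF]⟩

/-- The Basilica group: the subgroup of `Equiv.Perm (List Bool)` generated by `a` and `b`. -/
def B : Subgroup (Equiv.Perm (List Bool)) := Subgroup.closure {a, b}

end Basilica

namespace Basilica

open scoped commutatorElement

section Sections

variable {α : Type*} {u u' v v' t : List α} {g g' h h' k : Equiv.Perm (List α)}

/-- The permutation `h` carries the subtree below the vertex `u` onto the subtree below the vertex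
`v`, acting there as `g`; for tree automorphisms this is `h(u) = v` and `h|_u = g` in the usual
notation. The target `v` is kept as an argument so that sections can be composed along paths of
vertices. -/
def HasSection (h : Equiv.Perm (List α)) (u v : List α) (g : Equiv.Perm (List α)) : Prop :=
  ∀ w, h (u ++ w) = v ++ g w

namespace HasSection

theorem one (u : List α) : HasSection 1 u u 1 := fun _ => rfl

theorem mul (hh' : HasSection h' v t g') (hh : HasSection h u v g) :
    HasSection (h' * h) u t (g' * g) := fun w => by
  rw [Equiv.Perm.mul_apply, hh, hh', Equiv.Perm.mul_apply]

theorem inv (hh : HasSection h u v g) : HasSection h⁻¹ v u g⁻¹ := fun w => by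
  rw [Equiv.Perm.inv_eq_iff_eq, hh, Equiv.Perm.inv_def, Equiv.apply_symm_apply]

theorem commutator (hh : HasSection h u u g) (hh' : HasSection h' u u g') :
    HasSection ⁅h, h'⁆ u u ⁅g, g'⁆ :=
  ((hh.mul hh').mul hh.inv).mul hh'.inv

theorem append (hh : HasSection h u v g) (hg : HasSection g u' v' k) :
    HasSection h (u ++ u') (v ++ v') k := fun w => by
  rw [List.append_assoc, hh, hg, List.append_assoc]

end HasSection

/-- The sections at the vertex `v` of the elements of `H` that preserve the subtree below `v`; for
a group `H` of tree automorphisms, this is the projection of the stabilizer of `v` in `H`. -/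
def sectionSubgroup (H : Subgroup (Equiv.Perm (List α))) (v : List α) :
    Subgroup (Equiv.Perm (List α)) where
  carrier := {g | ∃ h ∈ H, HasSection h v v g}
  one_mem' := ⟨1, one_mem H, .one v⟩
  mul_mem' := fun ⟨h, hH, hs⟩ ⟨h', hH', hs'⟩ => ⟨h * h', mul_mem hH hH', hs.mul hs'⟩
  inv_mem' := fun ⟨h, hH, hs⟩ => ⟨h⁻¹, inv_mem hH, hs.inv⟩

end Sections

theorem a_mem_B : a ∈ B := Subgroup.subset_closure (.inl rfl)

theorem b_mem_B : b ∈ B := Subgroup.subset_closure (.inr rfl)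

theorem hasSection_a_false : HasSection a [false] [false] 1 := fun _ => rfl

theorem hasSection_a_true : HasSection a [true] [true] b := fun _ => rfl

theorem hasSection_b_false : HasSection b [false] [true] 1 := fun _ => rfl

theorem hasSection_b_true : HasSection b [true] [false] a := fun _ => rfl

theorem hasSection_b_sq_true : HasSection (b ^ 2) [true] [true] a := by
  simpa only [sq, one_mul] using hasSection_b_false.mul hasSection_b_true

/- The path followed is `1 ↦ 0 ↦ 0 ↦ 1 ↦ 1`; only the last step, along `a`, acts nontrivially. -/
theorem hasSection_commutator_true : HasSection ⁅a, b⁆ [true] [true] b := by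
  simpa only [commutatorElement_def, inv_one, mul_one] using
    ((hasSection_a_true.mul hasSection_b_false).mul hasSection_a_false.inv).mul
      hasSection_b_false.inv

theorem a_mem_sectionSubgroup_commutator : a ∈ sectionSubgroup ⁅B, B⁆ [true, true] := by
  have hmem : ⁅a, b⁆ ∈ ⁅B, B⁆ := Subgroup.commutator_mem_commutator a_mem_B b_mem_B
  have hsq : HasSection (⁅a, b⁆ ^ 2) [true] [true] (b ^ 2) := by
    simpa only [sq] using hasSection_commutator_true.mul hasSection_commutator_true
  exact ⟨⁅a, b⁆ ^ 2, pow_mem hmem 2, hsq.append hasSection_b_sq_true⟩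

theorem b_mem_sectionSubgroup_commutator : b ∈ sectionSubgroup ⁅B, B⁆ [true, true] := by
  have hmem : ⁅a, b⁆ ∈ B := B.commutator_le_self
    (Subgroup.commutator_mem_commutator a_mem_B b_mem_B)
  have hcomm : HasSection ⁅b ^ 2, ⁅a, b⁆⁆ [true] [true] ⁅a, b⁆ :=
    hasSection_b_sq_true.commutator hasSection_commutator_true
  exact ⟨⁅b ^ 2, ⁅a, b⁆⁆, Subgroup.commutator_mem_commutator (pow_mem b_mem_B 2) hmem,
    hcomm.append hasSection_commutator_true⟩

theorem B_le_sectionSubgroup_commutator : B ≤ sectionSubgroup ⁅B, B⁆ [true, true] := by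
  refine (Subgroup.closure_le _).2 ?_
  rintro _ (rfl | rfl)
  · exact a_mem_sectionSubgroup_commutator
  · exact b_mem_sectionSubgroup_commutator

end Basilica

open Basilica in
/-- The section at the level-two vertex `11` of the commutator subgroup of the
Basilica group contains all of `B`. -/
theorem basilica_commutator_section (g : Equiv.Perm (List Bool)) (hg : g ∈ B) :
    ∃ h ∈ ⁅B, B⁆, ∀ w : List Bool, h (true :: true :: w) = true :: true :: g w :=
  B_le_sectionSubgroup_commutator hg
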